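/- Assume in addition that for all x ≤ −3/2: |x·g'(x)| ≤ C₂|g(x)|, |x²·g''(x)| ≤ C₄|g(x)|, |x·f'(x)| ≤ C₃, and |x²·f''(x)| ≤ C₅, for constants C₂, C₃, C₄, C₅ > 0. Define, for u in the Schwartz space, Tu = −(1/2)Γ¹R₋'R₋''u − i(R₋')²Γ¹Du + iR₋R₋''Γ¹Du − (i/2)Γ¹R₋R₋'''u − iR₋·((R₋g')'·λΓ²u + (R₋f')'·u). Then there exists a constant c > 0, uniform in λ ≥ 1, such that for every u in the Schwartz space 𝒮(ℝ, ℂ⁴): ‖Tu‖ ≤ c(‖H₀u‖ + ‖u‖). (The operator −iT is the double commutator [i[H₀, A₋], A₋] computed on Schwartz functions, so [A₋, [A₋, H₀]] extends to a bounded operator from D(H₀) to L²(ℝ, ℂ⁴).) -/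

import Mathlib

noncomputable section

open MeasureTheory

abbrev V4 : Type := EuclideanSpace ℂ (Fin 4)

/-- A `4 × 4` complex matrix acting on `ℂ⁴` as a continuous linear map. -/
def Mop (A : Matrix (Fin 4) (Fin 4) ℂ) : V4 →L[ℂ] V4 := Matrix.toEuclideanCLM (𝕜 := ℂ) A

/-- The `L²` inner product `⟨u, v⟩ = ∫ ⟨u(x), v(x)⟩ dx` (conjugate-linear in the first slot). -/
def L2inner (u v : ℝ → V4) : ℂ := ∫ x : ℝ, (inner ℂ (u x) (v x) : ℂ)

/-- The `L²` norm `‖u‖ = (∫ ‖u(x)‖² dx)^{1/2}`. -/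
def L2norm (u : ℝ → V4) : ℝ := Real.sqrt (∫ x : ℝ, ‖u x‖ ^ 2)

/-- The operator `D = −i d/dx`. -/
def Dop (u : ℝ → V4) : ℝ → V4 := fun x => (-Complex.I) • deriv u x

/-- The per-mode free Dirac Hamiltonian `H₀u = Γ¹Du + λgΓ²u + fu`. -/
def H0op (Γ1 Γ2 : Matrix (Fin 4) (Fin 4) ℂ) (g f : ℝ → ℝ) (lam : ℝ) (u : ℝ → V4) : ℝ → V4 :=
  fun x => Mop Γ1 (Dop u x) + (lam * g x) • Mop Γ2 (u x) + f x • u x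

/-- The operator `Qu = −u'' + λ²g²u`. -/
def Qop (g : ℝ → ℝ) (lam : ℝ) (u : ℝ → V4) : ℝ → V4 :=
  fun x => -(deriv (deriv u) x) + (lam ^ 2 * g x ^ 2) • u x

/-- The comparison operator `Nu = Qu + (1 + x²)u`. -/
def Nop (g : ℝ → ℝ) (lam : ℝ) (u : ℝ → V4) : ℝ → V4 :=
  fun x => Qop g lam u x + (1 + x ^ 2) • u x

/-- The coefficient `R₋(x) = j₋(x/S)² · x` of the conjugate operator at the double horizon. -/
def Rm (jm : ℝ → ℝ) (S : ℝ) (x : ℝ) : ℝ := (jm (x / S)) ^ 2 * x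

/-- The conjugate operator at the double horizon, `A₋u = R₋Du − (i/2)R₋'u = ½{R₋, D}u`. -/
def Amop (jm : ℝ → ℝ) (S : ℝ) (u : ℝ → V4) : ℝ → V4 :=
  fun x => Rm jm S x • Dop u x - ((Complex.I / 2) * ((deriv (Rm jm S) x : ℝ) : ℂ)) • u x

/-- The operator
`T = −(1/2)Γ¹R₋'R₋'' − i(R₋')²Γ¹D + iR₋R₋''Γ¹D − (i/2)Γ¹R₋R₋''' − iR₋((R₋g')'λΓ² + (R₋f')')`,
so that `−iT = [i[H₀, A₋], A₋]` on Schwartz functions. -/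
def DcommOp (Γ1 Γ2 : Matrix (Fin 4) (Fin 4) ℂ) (g f : ℝ → ℝ) (lam : ℝ)
    (jm : ℝ → ℝ) (S : ℝ) (u : ℝ → V4) : ℝ → V4 :=
  fun x =>
    (-(1 / 2 : ℝ) * (deriv (Rm jm S) x * deriv (deriv (Rm jm S)) x)) • Mop Γ1 (u x)
      - (Complex.I * ((deriv (Rm jm S) x ^ 2 : ℝ) : ℂ)) • Mop Γ1 (Dop u x)
      + (Complex.I * ((Rm jm S x * deriv (deriv (Rm jm S)) x : ℝ) : ℂ)) • Mop Γ1 (Dop u x)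
      - ((Complex.I / 2) * ((Rm jm S x * deriv (deriv (deriv (Rm jm S))) x : ℝ) : ℂ)) •
          Mop Γ1 (u x)
      - (Complex.I * ((Rm jm S x : ℝ) : ℂ)) •
          ((lam * deriv (fun y => Rm jm S y * deriv g y) x) • Mop Γ2 (u x)
            + deriv (fun y => Rm jm S y * deriv f y) x • u x)

set_option maxHeartbeats 1000000

lemma three_sq (p q r : ℝ) : (p + q + r) ^ 2 ≤ 3 * (p ^ 2 + q ^ 2 + r ^ 2) := by
  nlinarith [sq_nonneg (p - q), sq_nonneg (p - r), sq_nonneg (q - r)]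

lemma sqrt_add_le' (a b : ℝ) (ha : 0 ≤ a) (hb : 0 ≤ b) :
    Real.sqrt (a + b) ≤ Real.sqrt a + Real.sqrt b := by
  rw [Real.sqrt_le_iff]
  refine ⟨by positivity, ?_⟩
  rw [add_sq, Real.sq_sqrt ha, Real.sq_sqrt hb]
  have : 0 ≤ 2 * Real.sqrt a * Real.sqrt b := by positivity
  linarith

lemma bdd_of_cont (F : ℝ → ℝ) (hF : Continuous F) (a b c : ℝ)
    (h1 : ∀ x < a, |F x| ≤ c) (h2 : ∀ x > b, |F x| ≤ c) : ∃ k : ℝ, 0 ≤ k ∧ ∀ x, |F x| ≤ k := by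
  obtain ⟨k, hk⟩ := (isCompact_Icc (a := a) (b := b)).exists_bound_of_continuousOn hF.continuousOn
  refine ⟨max (max k c) 0, le_max_right _ _, fun x => ?_⟩
  rcases lt_or_ge x a with h | h
  · exact (h1 x h).trans (by simp)
  rcases lt_or_ge b x with h' | h'
  · exact (h2 x h').trans (by simp)
  have := hk x ⟨h, h'⟩
  rw [Real.norm_eq_abs] at this
  exact this.trans (by simp)

lemma Rm_facts (S : ℝ) (hS : 1 ≤ S)
    (jm : ℝ → ℝ) (hjm_smooth : ContDiff ℝ (⊤ : ℕ∞) jm)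
    (hjm_range : ∀ t : ℝ, jm t ∈ Set.Icc (0 : ℝ) 1)
    (hjm_one : ∀ t : ℝ, t ≤ -2 → jm t = 1)
    (hjm_zero : ∀ t : ℝ, -(3 / 2 : ℝ) ≤ t → jm t = 0) :
    Differentiable ℝ (Rm jm S) ∧ (∀ x, |Rm jm S x| ≤ |x|) ∧
    (∀ x, -(3/2 : ℝ) < x → Rm jm S x = 0) ∧
    ∃ k : ℝ, 0 ≤ k ∧ ∀ x, |deriv (Rm jm S) x| ≤ k ∧
      |deriv (Rm jm S) x * deriv (deriv (Rm jm S)) x| ≤ k ∧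
      |deriv (Rm jm S) x ^ 2| ≤ k ∧
      |Rm jm S x * deriv (deriv (Rm jm S)) x| ≤ k ∧
      |Rm jm S x * deriv (deriv (deriv (Rm jm S))) x| ≤ k := by
  have hS0 : 0 < S := by linarith
  have hR : ContDiff ℝ (⊤ : ℕ∞) (Rm jm S) := by
    unfold Rm
    exact ((hjm_smooth.comp (contDiff_id.div_const S)).pow 2).mul contDiff_id
  have hR1 : ContDiff ℝ (⊤ : ℕ∞) (deriv (Rm jm S)) := (contDiff_infty_iff_deriv.1 hR).2
  have hR2 : ContDiff ℝ (⊤ : ℕ∞) (deriv (deriv (Rm jm S))) := (contDiff_infty_iff_deriv.1 hR1).2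
  have hR3 : ContDiff ℝ (⊤ : ℕ∞) (deriv (deriv (deriv (Rm jm S)))) :=
    (contDiff_infty_iff_deriv.1 hR2).2
  have hz : ∀ x, -(3/2 : ℝ) * S < x → Rm jm S x = 0 := by
    intro x hx
    have : jm (x / S) = 0 := hjm_zero _ (by rw [le_div_iff₀ hS0]; linarith)
    simp [Rm, this]
  have ho : ∀ x, x < -2 * S → Rm jm S x = x := by
    intro x hx
    have : jm (x / S) = 1 := hjm_one _ (by rw [div_le_iff₀ hS0]; linarith)
    simp [Rm, this]
  have e0 : ∀ x, -(3/2 : ℝ) * S < x → Rm jm S =ᶠ[nhds x] fun _ => (0:ℝ) := by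
    intro x hx
    filter_upwards [Ioi_mem_nhds hx] with y hy using hz y hy
  have e1 : ∀ x, x < -2 * S → Rm jm S =ᶠ[nhds x] fun y => y := by
    intro x hx
    filter_upwards [Iio_mem_nhds hx] with y hy using ho y hy
  have z1 : ∀ x, -(3/2 : ℝ) * S < x → deriv (Rm jm S) x = 0 ∧ deriv (deriv (Rm jm S)) x = 0 ∧
      deriv (deriv (deriv (Rm jm S))) x = 0 := by
    intro x hx
    refine ⟨?_, ?_, ?_⟩
    · rw [(e0 x hx).deriv_eq]; simp
    · rw [(e0 x hx).deriv.deriv_eq]; simp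
    · rw [(e0 x hx).deriv.deriv.deriv_eq]; simp
  have o1 : ∀ x, x < -2 * S → deriv (Rm jm S) x = 1 ∧ deriv (deriv (Rm jm S)) x = 0 ∧
      deriv (deriv (deriv (Rm jm S))) x = 0 := by
    intro x hx
    refine ⟨?_, ?_, ?_⟩
    · rw [(e1 x hx).deriv_eq]; simp
    · rw [(e1 x hx).deriv.deriv_eq]; simp
    · rw [(e1 x hx).deriv.deriv.deriv_eq]; simp
  refine ⟨hR.differentiable (by simp), ?_, ?_, ?_⟩
  · intro x
    obtain ⟨h0, h1⟩ := hjm_range (x / S)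
    rw [Rm, abs_mul, abs_of_nonneg (sq_nonneg _)]
    exact mul_le_of_le_one_left (abs_nonneg _) (pow_le_one₀ h0 h1)
  · intro x hx
    exact hz x (by nlinarith)
  · obtain ⟨k1, p1, h1⟩ := bdd_of_cont (deriv (Rm jm S)) hR1.continuous (-2 * S) (-(3/2) * S) 1
      (fun x hx => by simp [o1 x hx]) (fun x hx => by simp [z1 x hx])
    obtain ⟨k2, p2, h2⟩ := bdd_of_cont (fun x => deriv (Rm jm S) x * deriv (deriv (Rm jm S)) x)
      (hR1.continuous.mul hR2.continuous) (-2 * S) (-(3/2) * S) 1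
      (fun x hx => by simp [o1 x hx]) (fun x hx => by simp [z1 x hx])
    obtain ⟨k3, p3, h3⟩ := bdd_of_cont (fun x => deriv (Rm jm S) x ^ 2)
      (hR1.continuous.pow 2) (-2 * S) (-(3/2) * S) 1
      (fun x hx => by simp [o1 x hx]) (fun x hx => by simp [z1 x hx])
    obtain ⟨k4, p4, h4⟩ := bdd_of_cont (fun x => Rm jm S x * deriv (deriv (Rm jm S)) x)
      (hR.continuous.mul hR2.continuous) (-2 * S) (-(3/2) * S) 1
      (fun x hx => by simp [o1 x hx]) (fun x hx => by simp [z1 x hx])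
    obtain ⟨k5, p5, h5⟩ := bdd_of_cont (fun x => Rm jm S x * deriv (deriv (deriv (Rm jm S))) x)
      (hR.continuous.mul hR3.continuous) (-2 * S) (-(3/2) * S) 1
      (fun x hx => by simp [o1 x hx]) (fun x hx => by simp [z1 x hx])
    refine ⟨k1 + k2 + k3 + k4 + k5, by positivity, fun x => ⟨?_, ?_, ?_, ?_, ?_⟩⟩
    · linarith [h1 x]
    · linarith [h2 x]
    · linarith [h3 x]
    · linarith [h4 x]
    · linarith [h5 x]

/-- Bound on R times the derivative of R times the derivative of h. -/
lemma R_deriv_bound (R h : ℝ → ℝ) (hR : Differentiable ℝ R) (hh : ContDiff ℝ (⊤ : ℕ∞) h)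
    (hRx : ∀ x, |R x| ≤ |x|) (hR0 : ∀ x, -(3/2 : ℝ) < x → R x = 0) (k : ℝ)
    (hk : ∀ x, |deriv R x| ≤ k) (G : ℝ → ℝ) (hG : ∀ x, 0 ≤ G x) (c d : ℝ)
    (hc : 0 ≤ c) (hd : 0 ≤ d)
    (h1 : ∀ x : ℝ, x ≤ -(3 / 2 : ℝ) → |x * deriv h x| ≤ c * G x)
    (h2 : ∀ x : ℝ, x ≤ -(3 / 2 : ℝ) → |x ^ 2 * deriv (deriv h) x| ≤ d * G x) (x : ℝ) :
    |R x * deriv (fun y => R y * deriv h y) x| ≤ (k * c + d) * G x := by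
  have hk0 : 0 ≤ k := (abs_nonneg _).trans (hk 0)
  rcases lt_or_ge (-(3/2 : ℝ)) x with hx | hx
  · rw [hR0 x hx]; simp only [zero_mul, abs_zero]
    exact mul_nonneg (by positivity) (hG x)
  have hd1 : DifferentiableAt ℝ (deriv h) x :=
    ((contDiff_infty_iff_deriv.1 hh).2.differentiable (by simp)) x
  have hD : deriv (fun y => R y * deriv h y) x = deriv R x * deriv h x + R x * deriv (deriv h) x :=
    deriv_fun_mul (hR x) hd1
  rw [hD]
  have a1 : |R x * deriv h x| ≤ c * G x := by
    refine le_trans ?_ (h1 x hx)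
    rw [abs_mul, abs_mul]
    exact mul_le_mul_of_nonneg_right (hRx x) (abs_nonneg _)
  have a2 : |R x ^ 2 * deriv (deriv h) x| ≤ d * G x := by
    refine le_trans ?_ (h2 x hx)
    rw [abs_mul, abs_mul, abs_pow, abs_pow]
    exact mul_le_mul_of_nonneg_right (pow_le_pow_left₀ (abs_nonneg _) (hRx x) 2) (abs_nonneg _)
  have e : R x * (deriv R x * deriv h x + R x * deriv (deriv h) x) =
      deriv R x * (R x * deriv h x) + R x ^ 2 * deriv (deriv h) x := by ring
  rw [e]
  refine (abs_add_le _ _).trans ?_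
  rw [abs_mul]
  have := mul_le_mul (hk x) a1 (abs_nonneg _) hk0
  linarith

lemma Mop_inner (A : Matrix (Fin 4) (Fin 4) ℂ) (hA : A.IsHermitian) (v w : V4) :
    inner ℂ (Mop A v) w = inner ℂ v (Mop A w) := by
  have h : IsSelfAdjoint (Mop A) := by
    have : IsSelfAdjoint A := hA
    exact this.map (Matrix.toEuclideanCLM (𝕜 := ℂ) (n := Fin 4))
  have h2 : ContinuousLinearMap.adjoint (Mop A) = Mop A := h
  conv_lhs => rw [← h2]
  rw [ContinuousLinearMap.adjoint_inner_left]

lemma Mop_mul (A B : Matrix (Fin 4) (Fin 4) ℂ) (v : V4) : Mop A (Mop B v) = Mop (A * B) v := by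
  simp [Mop, map_mul]

lemma Mop_norm (A : Matrix (Fin 4) (Fin 4) ℂ) (hA : A.IsHermitian) (hs : A * A = 1) (v : V4) :
    ‖Mop A v‖ = ‖v‖ := by
  have h : inner ℂ (Mop A v) (Mop A v) = inner ℂ v v := by
    rw [Mop_inner A hA, Mop_mul, hs]; simp [Mop]
  rw [inner_self_eq_norm_sq_to_K, inner_self_eq_norm_sq_to_K] at h
  have h' : ‖Mop A v‖ ^ 2 = ‖v‖ ^ 2 := by exact_mod_cast h
  exact (pow_left_inj₀ (norm_nonneg _) (norm_nonneg _) (by norm_num)).1 h'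

lemma B_symm (Γ1 Γ2 : Matrix (Fin 4) (Fin 4) ℂ)
    (hΓ1_herm : Γ1.IsHermitian) (hΓ2_herm : Γ2.IsHermitian)
    (hanticomm : Γ1 * Γ2 + Γ2 * Γ1 = 0) (p q : V4) :
    (inner ℂ (Mop Γ1 ((-Complex.I) • p)) (Mop Γ2 q)).re =
    (inner ℂ (Mop Γ1 ((-Complex.I) • q)) (Mop Γ2 p)).re := by
  have h21 : Γ2 * Γ1 = - (Γ1 * Γ2) := by
    rw [eq_neg_iff_add_eq_zero, add_comm]; exact hanticomm
  have e : inner ℂ (Mop Γ2 p) (Mop Γ1 ((-Complex.I) • q)) =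
      inner ℂ (Mop Γ1 ((-Complex.I) • p)) (Mop Γ2 q) := by
    rw [Mop_inner _ hΓ2_herm, Mop_mul, h21, Mop_inner _ hΓ1_herm, Mop_mul]
    have : Mop (-(Γ1 * Γ2)) = - Mop (Γ1 * Γ2) := by simp [Mop]
    rw [this]
    simp [inner_smul_left]
  rw [← e, ← inner_conj_symm, Complex.conj_re]

lemma int_sq (u : SchwartzMap ℝ V4) : Integrable (fun x => ‖u x‖ ^ 2) := by
  have := (u.memLp 2).integrable_norm_pow (by norm_num)
  simpa using this

lemma int_sq_deriv (u : SchwartzMap ℝ V4) : Integrable (fun x => ‖deriv u x‖ ^ 2) := by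
  simpa using int_sq (SchwartzMap.derivCLM ℂ V4 u)

lemma cont_deriv (u : SchwartzMap ℝ V4) : Continuous (fun x => deriv u x) := by
  exact (SchwartzMap.derivCLM ℂ V4 u).continuous

/-- Continuous functions dominated by the Sobolev density are integrable. -/
lemma int_dom (u : SchwartzMap ℝ V4) (F : ℝ → ℝ) (hF : Continuous F) (C : ℝ)
    (h : ∀ x, |F x| ≤ C * (‖u x‖ ^ 2 + ‖deriv u x‖ ^ 2)) : Integrable F :=
  (((int_sq u).add (int_sq_deriv u)).const_mul C).mono' hF.aestronglyMeasurable
    (Filter.Eventually.of_forall h)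

lemma int_gsq (u : SchwartzMap ℝ V4) (g : ℝ → ℝ) (hg : Continuous g) (Cb : ℝ)
    (hg_bdd : ∀ x : ℝ, |g x| ≤ Cb) (lam : ℝ) :
    Integrable (fun x => lam ^ 2 * g x ^ 2 * ‖u x‖ ^ 2) := by
  have hu := u.continuous
  refine int_dom u _ (by fun_prop) (lam ^ 2 * Cb ^ 2) fun x => ?_
  rw [abs_of_nonneg (by positivity)]
  have h1 : g x ^ 2 ≤ Cb ^ 2 := by
    rw [← sq_abs]; exact pow_le_pow_left₀ (abs_nonneg _) (hg_bdd x) 2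
  have : ‖u x‖ ^ 2 ≤ ‖u x‖ ^ 2 + ‖deriv u x‖ ^ 2 := by linarith [sq_nonneg ‖deriv u x‖]
  gcongr

/-- The quadratic form `Re⟨-iΓ¹p, Γ²q⟩`. -/
def Bf (Γ1 Γ2 : Matrix (Fin 4) (Fin 4) ℂ) (p q : V4) : ℝ :=
  (inner ℂ (Mop Γ1 ((-Complex.I) • p)) (Mop Γ2 q)).re

lemma energy (Γ1 Γ2 : Matrix (Fin 4) (Fin 4) ℂ)
    (hΓ1_herm : Γ1.IsHermitian) (hΓ2_herm : Γ2.IsHermitian)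
    (hΓ1_sq : Γ1 * Γ1 = 1) (hΓ2_sq : Γ2 * Γ2 = 1)
    (hanticomm : Γ1 * Γ2 + Γ2 * Γ1 = 0)
    (g : ℝ → ℝ) (hg_smooth : ContDiff ℝ (⊤ : ℕ∞) g) (Cb : ℝ) (hg_bdd : ∀ x : ℝ, |g x| ≤ Cb)
    (Cg : ℝ) (hg' : ∀ x : ℝ, |deriv g x| ≤ Cg * |g x|)
    (f : ℝ → ℝ) (hf : Continuous f) (Mf : ℝ) (hf_bdd : ∀ x : ℝ, |f x| ≤ Mf)
    (u : SchwartzMap ℝ V4) (lam : ℝ) :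
    2 * (∫ x, ‖deriv u x‖ ^ 2) + (∫ x, lam ^ 2 * g x ^ 2 * ‖u x‖ ^ 2) ≤
      4 * (∫ x, ‖H0op Γ1 Γ2 g f lam u x‖ ^ 2) + (4 * Mf ^ 2 + Cg ^ 2) * ∫ x, ‖u x‖ ^ 2 := by
  have n1 : ∀ v, ‖Mop Γ1 v‖ = ‖v‖ := Mop_norm Γ1 hΓ1_herm hΓ1_sq
  have n2 : ∀ v, ‖Mop Γ2 v‖ = ‖v‖ := Mop_norm Γ2 hΓ2_herm hΓ2_sq
  have hgc := hg_smooth.continuous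
  have hg1c : Continuous (deriv g) := (contDiff_infty_iff_deriv.1 hg_smooth).2.continuous
  have hgd := hg_smooth.differentiable (by simp)
  have hu := u.continuous
  have hu1 := cont_deriv u
  have hCb0 : 0 ≤ Cb := (abs_nonneg _).trans (hg_bdd 0)
  have hBle : ∀ p q, |Bf Γ1 Γ2 p q| ≤ ‖p‖ * ‖q‖ := by
    intro p q
    refine (Complex.abs_re_le_norm _).trans ((norm_inner_le_norm _ _).trans ?_)
    rw [n1, n2, norm_smul]; simp
  have hw : ∀ x, HasDerivAt (fun y => Bf Γ1 Γ2 (u y) (u y)) (2 * Bf Γ1 Γ2 (deriv u x) (u x)) x := by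
    intro x
    have d0 : HasDerivAt u (deriv u x) x := u.differentiableAt.hasDerivAt
    have d1 : HasDerivAt (fun y => Mop Γ1 ((-Complex.I) • u y)) (Mop Γ1 ((-Complex.I) • deriv u x)) x :=
      ((Mop Γ1).restrictScalars ℝ).hasFDerivAt.comp_hasDerivAt x (d0.const_smul (-Complex.I))
    have d2 : HasDerivAt (fun y => Mop Γ2 (u y)) (Mop Γ2 (deriv u x)) x :=
      ((Mop Γ2).restrictScalars ℝ).hasFDerivAt.comp_hasDerivAt x d0
    have d3 := Complex.reCLM.hasFDerivAt.comp_hasDerivAt x (d1.inner ℂ d2)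
    refine d3.congr_deriv ?_
    have := B_symm Γ1 Γ2 hΓ1_herm hΓ2_herm hanticomm (u x) (deriv u x)
    rw [Complex.reCLM_apply, Complex.add_re, this, Bf]
    ring
  have hBc : ∀ p q : ℝ → V4, Continuous p → Continuous q →
      Continuous fun x => Bf Γ1 Γ2 (p x) (q x) := by
    intro p q hp hq
    unfold Bf
    fun_prop
  have hc1 := hBc _ _ hu1 hu
  have hc0 := hBc _ _ hu hu
  have i1 : Integrable (fun x => g x * (2 * Bf Γ1 Γ2 (deriv u x) (u x))) := by
    refine int_dom u _ (by fun_prop) Cb fun x => ?_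
    rw [abs_mul, abs_mul, abs_two]
    refine mul_le_mul (hg_bdd x) ?_ (by positivity) hCb0
    nlinarith [hBle (deriv u x) (u x), sq_nonneg (‖u x‖ - ‖deriv u x‖)]
  have hww : ∀ x, |Bf Γ1 Γ2 (u x) (u x)| ≤ ‖u x‖ ^ 2 + ‖deriv u x‖ ^ 2 := fun x => by
    nlinarith [hBle (u x) (u x), sq_nonneg (‖deriv u x‖)]
  have i2 : Integrable (fun x => g x * Bf Γ1 Γ2 (u x) (u x)) := by
    refine int_dom u _ (by fun_prop) Cb fun x => ?_
    rw [abs_mul]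
    exact mul_le_mul (hg_bdd x) (hww x) (by positivity) hCb0
  have i3 : Integrable (fun x => deriv g x * Bf Γ1 Γ2 (u x) (u x)) := by
    refine int_dom u _ (by fun_prop) (|Cg| * Cb) fun x => ?_
    rw [abs_mul]
    refine mul_le_mul ((hg' x).trans ?_) (hww x) (by positivity) (by positivity)
    exact mul_le_mul (le_abs_self _) (hg_bdd x) (abs_nonneg _) (abs_nonneg _)
  have hparts : ∫ x, g x * (2 * Bf Γ1 Γ2 (deriv u x) (u x)) =
      - ∫ x, deriv g x * Bf Γ1 Γ2 (u x) (u x) :=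
    integral_mul_deriv_eq_deriv_mul_of_integrable (fun x _ => (hgd x).hasDerivAt)
      (fun x _ => hw x) i1 i3 i2
  have hU := int_sq u
  have hA := int_sq_deriv u
  have hB := int_gsq u g hgc Cb hg_bdd lam
  have hcomm : 2 * (lam * ∫ x, deriv g x * Bf Γ1 Γ2 (u x) (u x)) ≤
      (∫ x, lam ^ 2 * g x ^ 2 * ‖u x‖ ^ 2) + Cg ^ 2 * ∫ x, ‖u x‖ ^ 2 := by
    rw [← integral_const_mul, ← integral_const_mul, ← integral_const_mul,
      ← integral_add hB (hU.const_mul _)]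
    refine integral_mono ((i3.const_mul _).const_mul _) (hB.add (hU.const_mul _)) fun x => ?_
    show 2 * (lam * (deriv g x * Bf Γ1 Γ2 (u x) (u x))) ≤
      lam ^ 2 * g x ^ 2 * ‖u x‖ ^ 2 + Cg ^ 2 * ‖u x‖ ^ 2
    have h1 : |lam * (deriv g x * Bf Γ1 Γ2 (u x) (u x))| ≤ |lam| * ((Cg * |g x|) * ‖u x‖ ^ 2) := by
      rw [abs_mul, abs_mul]
      refine mul_le_mul_of_nonneg_left ?_ (abs_nonneg _)
      refine mul_le_mul (hg' x) ?_ (abs_nonneg _) ((abs_nonneg _).trans (hg' x))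
      rw [sq]; exact hBle _ _
    have h2 : 2 * (|lam| * ((Cg * |g x|) * ‖u x‖ ^ 2)) ≤
        (|lam| ^ 2 * |g x| ^ 2 + Cg ^ 2) * ‖u x‖ ^ 2 := by
      have : 2 * (|lam| * (Cg * |g x|)) ≤ |lam| ^ 2 * |g x| ^ 2 + Cg ^ 2 := by
        nlinarith [sq_nonneg (|lam| * |g x| - Cg)]
      nlinarith [mul_le_mul_of_nonneg_right this (sq_nonneg ‖u x‖)]
    rw [sq_abs, sq_abs] at h2
    linarith [le_abs_self (lam * (deriv g x * Bf Γ1 Γ2 (u x) (u x)))]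
  have nD : ∀ x, ‖Dop u x‖ = ‖deriv u x‖ := fun x => by simp [Dop, norm_smul]
  have nb : ∀ x, ‖(lam * g x) • Mop Γ2 (u x)‖ = |lam| * |g x| * ‖u x‖ := fun x => by
    rw [norm_smul, n2, Real.norm_eq_abs, abs_mul]
  have nf : ∀ x, ‖f x • u x‖ ≤ Mf * ‖u x‖ := fun x => by
    rw [norm_smul, Real.norm_eq_abs]
    exact mul_le_mul_of_nonneg_right (hf_bdd x) (norm_nonneg _)
  have hHc : Continuous (fun x => H0op Γ1 Γ2 g f lam u x) := by
    unfold H0op Dop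
    fun_prop
  have hN : Integrable (fun x => ‖H0op Γ1 Γ2 g f lam u x‖ ^ 2) := by
    refine int_dom u _ (by fun_prop) (2 * (1 + (|lam| * Cb + Mf) ^ 2)) fun x => ?_
    rw [abs_of_nonneg (by positivity)]
    have h1 : ‖H0op Γ1 Γ2 g f lam u x‖ ≤ ‖deriv u x‖ + |lam| * |g x| * ‖u x‖ + Mf * ‖u x‖ := by
      refine norm_add_le_of_le (norm_add_le_of_le ?_ (nb x).le) (nf x)
      rw [n1, nD]
    have h2 : |lam| * |g x| * ‖u x‖ ≤ |lam| * Cb * ‖u x‖ := by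
      have := hg_bdd x
      gcongr
    have h3 : ‖H0op Γ1 Γ2 g f lam u x‖ ≤ ‖deriv u x‖ + (|lam| * Cb + Mf) * ‖u x‖ := by linarith
    have h4 := pow_le_pow_left₀ (norm_nonneg _) h3 2
    refine h4.trans ?_
    generalize |lam| * Cb + Mf = m
    nlinarith [sq_nonneg (‖deriv u x‖ - m * ‖u x‖), sq_nonneg (‖u x‖), sq_nonneg (m * ‖deriv u x‖)]
  have hpt : ∀ x, ‖deriv u x‖ ^ 2 + lam ^ 2 * g x ^ 2 * ‖u x‖ ^ 2
      + lam * (g x * (2 * Bf Γ1 Γ2 (deriv u x) (u x))) ≤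
      2 * ‖H0op Γ1 Γ2 g f lam u x‖ ^ 2 + 2 * Mf ^ 2 * ‖u x‖ ^ 2 := by
    intro x
    have h1 := norm_add_sq (𝕜 := ℂ) (Mop Γ1 (Dop u x)) ((lam * g x) • Mop Γ2 (u x))
    rw [← Complex.coe_smul, inner_smul_right, Complex.coe_smul, n1, nD, nb] at h1
    have h2 : RCLike.re (((lam * g x : ℝ) : ℂ) * inner ℂ (Mop Γ1 (Dop u x)) (Mop Γ2 (u x))) =
        lam * g x * Bf Γ1 Γ2 (deriv u x) (u x) := Complex.re_ofReal_mul _ _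
    rw [h2, mul_pow, mul_pow, sq_abs, sq_abs] at h1
    have h3 : Mop Γ1 (Dop u x) + (lam * g x) • Mop Γ2 (u x) =
        H0op Γ1 Γ2 g f lam u x - f x • u x := by simp [H0op]
    have h4 : ‖Mop Γ1 (Dop u x) + (lam * g x) • Mop Γ2 (u x)‖ ≤
        ‖H0op Γ1 Γ2 g f lam u x‖ + Mf * ‖u x‖ := by
      rw [h3]; exact norm_sub_le_of_le le_rfl (nf x)
    have h5 := pow_le_pow_left₀ (norm_nonneg _) h4 2
    nlinarith [sq_nonneg (‖H0op Γ1 Γ2 g f lam u x‖ - Mf * ‖u x‖)]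
  have hint := integral_mono ((hA.add hB).add (i1.const_mul lam))
    ((hN.const_mul 2).add (hU.const_mul (2 * Mf ^ 2))) hpt
  have e1 := integral_add (hA.add hB) (i1.const_mul lam)
  have e2 := integral_add hA hB
  have e3 := integral_add (hN.const_mul 2) (hU.const_mul (2 * Mf ^ 2))
  simp only [Pi.add_apply] at hint e1 e2 e3
  rw [e1, e2, e3, integral_const_mul, integral_const_mul, integral_const_mul, hparts] at hint
  linarith

/-- the double commutator `[A₋, [A₋, H₀]] = iT` is bounded by the graph norm
of `H₀`, uniformly in `λ ≥ 1`: under the decay assumptions on `g`, `g''`, `f'`, `f''` on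
`(−∞, −3/2]`, there is `c > 0` with `‖Tu‖ ≤ c(‖H₀u‖ + ‖u‖)` for every Schwartz `u`. -/
theorem double_commutator_H0_Aminus_bounded
    (Γ1 Γ2 : Matrix (Fin 4) (Fin 4) ℂ)
    (hΓ1_herm : Γ1.IsHermitian) (hΓ2_herm : Γ2.IsHermitian)
    (hΓ1_sq : Γ1 * Γ1 = 1) (hΓ2_sq : Γ2 * Γ2 = 1)
    (hanticomm : Γ1 * Γ2 + Γ2 * Γ1 = 0)
    (g : ℝ → ℝ) (hg_smooth : ContDiff ℝ (⊤ : ℕ∞) g) (Cb : ℝ) (hg_bdd : ∀ x : ℝ, |g x| ≤ Cb)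
    (Cg : ℝ) (hCg : 0 < Cg) (hg' : ∀ x : ℝ, |deriv g x| ≤ Cg * |g x|)
    (f : ℝ → ℝ) (hf_smooth : ContDiff ℝ (⊤ : ℕ∞) f)
    (Mf : ℝ) (hf_bdd : ∀ x : ℝ, |f x| ≤ Mf)
    (Mf' : ℝ) (hf'_bdd : ∀ x : ℝ, |deriv f x| ≤ Mf')
    (S : ℝ) (hS : 1 ≤ S)
    (jm : ℝ → ℝ) (hjm_smooth : ContDiff ℝ (⊤ : ℕ∞) jm)
    (hjm_range : ∀ t : ℝ, jm t ∈ Set.Icc (0 : ℝ) 1)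
    (hjm_one : ∀ t : ℝ, t ≤ -2 → jm t = 1)
    (hjm_zero : ∀ t : ℝ, -(3 / 2 : ℝ) ≤ t → jm t = 0)
    (C2 : ℝ) (hC2 : 0 < C2)
    (hxg' : ∀ x : ℝ, x ≤ -(3 / 2 : ℝ) → |x * deriv g x| ≤ C2 * |g x|)
    (C4 : ℝ) (hC4 : 0 < C4)
    (hx2g'' : ∀ x : ℝ, x ≤ -(3 / 2 : ℝ) → |x ^ 2 * deriv (deriv g) x| ≤ C4 * |g x|)
    (C3 : ℝ) (hC3 : 0 < C3)
    (hxf' : ∀ x : ℝ, x ≤ -(3 / 2 : ℝ) → |x * deriv f x| ≤ C3)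
    (C5 : ℝ) (hC5 : 0 < C5)
    (hx2f'' : ∀ x : ℝ, x ≤ -(3 / 2 : ℝ) → |x ^ 2 * deriv (deriv f) x| ≤ C5) :
    ∃ c : ℝ, 0 < c ∧ ∀ (u : SchwartzMap ℝ V4) (lam : ℝ), 1 ≤ lam →
      L2norm (DcommOp Γ1 Γ2 g f lam jm S ⇑u) ≤
        c * (L2norm (H0op Γ1 Γ2 g f lam ⇑u) + L2norm ⇑u) := by
  obtain ⟨hRd, hRx, hR0, k, hk0, hk⟩ := Rm_facts S hS jm hjm_smooth hjm_range hjm_one hjm_zero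
  have bg := R_deriv_bound (Rm jm S) g hRd hg_smooth hRx hR0 k (fun x => (hk x).1)
    (fun x => |g x|) (fun x => abs_nonneg _) C2 C4 hC2.le hC4.le hxg' hx2g''
  have bf := R_deriv_bound (Rm jm S) f hRd hf_smooth hRx hR0 k (fun x => (hk x).1)
    (fun x => 1) (fun x => zero_le_one) C3 C5 hC3.le hC5.le (by simpa using hxf')
    (by simpa using hx2f'')
  simp only [mul_one] at bf
  set kg := k * C2 + C4 with hkg
  set kf := k * C3 + C5 with hkf
  have hkg0 : 0 ≤ kg := by positivity
  have hkf0 : 0 ≤ kf := by positivity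
  set K := 2 * k + kg + kf with hK
  have hK0 : 0 ≤ K := by positivity
  set E := 4 * Mf ^ 2 + Cg ^ 2 + 5 with hE
  have hE0 : 0 < E := by positivity
  refine ⟨Real.sqrt (3 * K ^ 2 * E) + 1, by positivity, fun u lam hlam => ?_⟩
  have hU := int_sq u
  have hA := int_sq_deriv u
  have hB := int_gsq u g hg_smooth.continuous Cb hg_bdd lam
  have hen := energy Γ1 Γ2 hΓ1_herm hΓ2_herm hΓ1_sq hΓ2_sq hanticomm g hg_smooth Cb hg_bdd Cg hg' f
    hf_smooth.continuous Mf hf_bdd u lam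
  have hpt : ∀ x, ‖DcommOp Γ1 Γ2 g f lam jm S u x‖ ^ 2 ≤
      3 * K ^ 2 * (‖u x‖ ^ 2 + ‖deriv u x‖ ^ 2 + lam ^ 2 * g x ^ 2 * ‖u x‖ ^ 2) := by
    intro x
    obtain ⟨q0, q1, q2, q3, q4⟩ := hk x
    have n1 : ∀ v, ‖Mop Γ1 v‖ = ‖v‖ := Mop_norm Γ1 hΓ1_herm hΓ1_sq
    have n2 : ∀ v, ‖Mop Γ2 v‖ = ‖v‖ := Mop_norm Γ2 hΓ2_herm hΓ2_sq
    have m1 := mul_le_mul_of_nonneg_right q1 (norm_nonneg (u x))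
    have m2 := mul_le_mul_of_nonneg_right q2 (norm_nonneg (deriv u x))
    have m3 := mul_le_mul_of_nonneg_right q3 (norm_nonneg (deriv u x))
    have m4 := mul_le_mul_of_nonneg_right q4 (norm_nonneg (u x))
    have m5 := mul_le_mul_of_nonneg_right (bf x) (norm_nonneg (u x))
    have m6 := mul_le_mul_of_nonneg_right (bg x) (mul_nonneg (abs_nonneg lam) (norm_nonneg (u x)))
    have nD : ‖Dop u x‖ = ‖deriv u x‖ := by simp [Dop, norm_smul]
    have hle : ‖DcommOp Γ1 Γ2 g f lam jm S u x‖ ≤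
        K * (‖u x‖ + ‖deriv u x‖ + |lam| * |g x| * ‖u x‖) := by
      unfold DcommOp
      have t1 : ‖(-(1 / 2 : ℝ) * (deriv (Rm jm S) x * deriv (deriv (Rm jm S)) x)) • Mop Γ1 (u x)‖
          ≤ 1 / 2 * (k * ‖u x‖) := by
        rw [norm_smul, n1, Real.norm_eq_abs, abs_mul, abs_neg, abs_of_pos (by norm_num : (0:ℝ) < 1/2)]
        linarith
      have t2 : ‖(Complex.I * ((deriv (Rm jm S) x ^ 2 : ℝ) : ℂ)) • Mop Γ1 (Dop u x)‖
          ≤ k * ‖deriv u x‖ := by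
        rw [norm_smul, n1, nD, norm_mul, Complex.norm_I, one_mul, Complex.norm_real,
          Real.norm_eq_abs]
        exact m2
      have t3 : ‖(Complex.I * ((Rm jm S x * deriv (deriv (Rm jm S)) x : ℝ) : ℂ)) •
          Mop Γ1 (Dop u x)‖ ≤ k * ‖deriv u x‖ := by
        rw [norm_smul, n1, nD, norm_mul, Complex.norm_I, one_mul, Complex.norm_real,
          Real.norm_eq_abs]
        exact m3
      have t4 : ‖((Complex.I / 2) * ((Rm jm S x * deriv (deriv (deriv (Rm jm S))) x : ℝ) : ℂ)) •
          Mop Γ1 (u x)‖ ≤ 1 / 2 * (k * ‖u x‖) := by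
        rw [norm_smul, n1, norm_mul, norm_div, Complex.norm_I, Complex.norm_real,
          Real.norm_eq_abs, Complex.norm_two]
        linarith
      have t5 : ‖(Complex.I * ((Rm jm S x : ℝ) : ℂ)) •
          ((lam * deriv (fun y => Rm jm S y * deriv g y) x) • Mop Γ2 (u x)
            + deriv (fun y => Rm jm S y * deriv f y) x • u x)‖ ≤
          kg * |g x| * (|lam| * ‖u x‖) + kf * ‖u x‖ := by
        rw [norm_smul, norm_mul, Complex.norm_I, one_mul, Complex.norm_real, Real.norm_eq_abs]
        refine (mul_le_mul_of_nonneg_left (norm_add_le _ _) (abs_nonneg _)).trans ?_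
        rw [norm_smul, norm_smul, n2, Real.norm_eq_abs, Real.norm_eq_abs, abs_mul]
        rw [abs_mul] at m5 m6
        linarith
      have hs : ‖(-(1 / 2 : ℝ) * (deriv (Rm jm S) x * deriv (deriv (Rm jm S)) x)) • Mop Γ1 (u x)
          - (Complex.I * ((deriv (Rm jm S) x ^ 2 : ℝ) : ℂ)) • Mop Γ1 (Dop u x)
          + (Complex.I * ((Rm jm S x * deriv (deriv (Rm jm S)) x : ℝ) : ℂ)) • Mop Γ1 (Dop u x)
          - ((Complex.I / 2) * ((Rm jm S x * deriv (deriv (deriv (Rm jm S))) x : ℝ) : ℂ)) •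
              Mop Γ1 (u x)
          - (Complex.I * ((Rm jm S x : ℝ) : ℂ)) •
              ((lam * deriv (fun y => Rm jm S y * deriv g y) x) • Mop Γ2 (u x)
                + deriv (fun y => Rm jm S y * deriv f y) x • u x)‖ ≤
          1 / 2 * (k * ‖u x‖) + k * ‖deriv u x‖ + k * ‖deriv u x‖ + 1 / 2 * (k * ‖u x‖)
            + (kg * |g x| * (|lam| * ‖u x‖) + kf * ‖u x‖) :=
        norm_sub_le_of_le (norm_sub_le_of_le (norm_add_le_of_le (norm_sub_le_of_le t1 t2) t3) t4) t5
      refine hs.trans ?_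
      have r1 := norm_nonneg (u x)
      have r2 := norm_nonneg (deriv u x)
      have r3 : 0 ≤ |lam| * |g x| * ‖u x‖ := by positivity
      have s1 : (k + kf) * ‖u x‖ ≤ K * ‖u x‖ := mul_le_mul_of_nonneg_right (by linarith) r1
      have s2 : (2 * k) * ‖deriv u x‖ ≤ K * ‖deriv u x‖ :=
        mul_le_mul_of_nonneg_right (by linarith) r2
      have s3 : kg * (|lam| * |g x| * ‖u x‖) ≤ K * (|lam| * |g x| * ‖u x‖) :=
        mul_le_mul_of_nonneg_right (by linarith) r3
      linarith
    have h2 := pow_le_pow_left₀ (norm_nonneg _) hle 2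
    refine h2.trans ?_
    have e : lam ^ 2 * g x ^ 2 * ‖u x‖ ^ 2 = (|lam| * |g x| * ‖u x‖) ^ 2 := by
      rw [mul_pow, mul_pow, sq_abs, sq_abs]
    rw [e, mul_pow]
    generalize ‖u x‖ = p
    generalize ‖deriv u x‖ = q
    generalize |lam| * |g x| * p = r
    have : (p + q + r) ^ 2 ≤ 3 * (p ^ 2 + q ^ 2 + r ^ 2) := three_sq p q r
    have := mul_le_mul_of_nonneg_left this (sq_nonneg K)
    linarith
  have hI : ∫ x, ‖DcommOp Γ1 Γ2 g f lam jm S u x‖ ^ 2 ≤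
      3 * K ^ 2 * ((∫ x, ‖u x‖ ^ 2) + (∫ x, ‖deriv u x‖ ^ 2)
        + ∫ x, lam ^ 2 * g x ^ 2 * ‖u x‖ ^ 2) := by
    have := integral_mono_of_nonneg (Filter.Eventually.of_forall fun x => by positivity)
      (((hU.add hA).add hB).const_mul (3 * K ^ 2)) (Filter.Eventually.of_forall hpt)
    refine this.trans (le_of_eq ?_)
    rw [integral_const_mul]
    congr 1
    have i1 := integral_add (hU.add hA) hB
    have i2 := integral_add hU hA
    simp only [Pi.add_apply] at i1 i2 ⊢
    rw [i1, i2]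
  unfold L2norm
  have pU : 0 ≤ ∫ x, ‖u x‖ ^ 2 := integral_nonneg fun x => by positivity
  have pA : 0 ≤ ∫ x, ‖deriv u x‖ ^ 2 := integral_nonneg fun x => by positivity
  have pN : 0 ≤ ∫ x, ‖H0op Γ1 Γ2 g f lam u x‖ ^ 2 := integral_nonneg fun x => by positivity
  have hI2 : ∫ x, ‖DcommOp Γ1 Γ2 g f lam jm S u x‖ ^ 2 ≤
      3 * K ^ 2 * E * ((∫ x, ‖H0op Γ1 Γ2 g f lam u x‖ ^ 2) + ∫ x, ‖u x‖ ^ 2) := by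
    refine hI.trans ?_
    rw [mul_assoc _ E]
    refine mul_le_mul_of_nonneg_left ?_ (by positivity)
    have z1 : 0 ≤ (4 * Mf ^ 2 + Cg ^ 2 + 1) * ∫ x, ‖H0op Γ1 Γ2 g f lam u x‖ ^ 2 := by positivity
    rw [hE]
    linarith
  refine (Real.sqrt_le_sqrt hI2).trans ?_
  rw [Real.sqrt_mul (by positivity)]
  refine mul_le_mul (by linarith) (sqrt_add_le' _ _ pN pU) (by positivity) (by positivity)
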